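/- Let N ≥ M ≥ 1, let H ∈ ℂ^{N×M}, let h_k denote the k-th column of H and H_k the N×(M−1) matrix obtained from H by deleting the k-th column. Then for every α > 0 and every k ∈ {1,…,M}, the matrix I_M + α H^H H is invertible and 1/[(I_M + α H^H H)^{-1}]_{kk} − 1 = α · h_k^H (I_N + α H_k H_k^H)^{-1} h_k. -/

import Mathlib

open Matrix
open scoped ComplexOrder

theorem aux_posDef {a b : Type*} [Fintype a] [Fintype b] [DecidableEq a]
    (G : Matrix b a ℂ) (α : ℝ) (hα : 0 < α) : (1 + (α : ℂ) • (Gᴴ * G)).PosDef := by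
  refine Matrix.PosDef.one.add_posSemidef ?_
  refine (Matrix.posSemidef_conjTranspose_mul_self G).smul ?_
  exact_mod_cast hα.le

theorem aux_comm {a b : Type*} [Fintype a] [Fintype b] [DecidableEq a] [DecidableEq b]
    (G : Matrix b a ℂ) (c : ℂ) : (1 + c • (Gᴴ * G)).det = (1 + c • (G * Gᴴ)).det := by
  rw [← Matrix.smul_mul, Matrix.det_one_add_mul_comm, Matrix.mul_smul]


open Matrix

/-- For `N ≥ M ≥ 1` (here `M = m+1`), `H ∈ ℂ^{N×M}`, `α > 0` and any column
index `k`, the matrix `I + α Hᴴ H` is invertible, and the MMSE SINR identity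
`1/[(I + α Hᴴ H)⁻¹]_{kk} − 1 = α hₖᴴ (I + α Hₖ Hₖᴴ)⁻¹ hₖ` holds, where `hₖ` is the `k`-th
column of `H` and `Hₖ` is obtained from `H` by deleting the `k`-th column. -/
theorem stmt_0 (m N : ℕ) (hNM : m + 1 ≤ N)
    (H : Matrix (Fin N) (Fin (m + 1)) ℂ) (α : ℝ) (hα : 0 < α) (k : Fin (m + 1)) :
    IsUnit (1 + (α : ℂ) • (Hᴴ * H)) ∧
      1 / (((1 + (α : ℂ) • (Hᴴ * H))⁻¹ : Matrix (Fin (m+1)) (Fin (m+1)) ℂ) k k) - 1 =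
        (α : ℂ) *
          (star (fun i => H i k) ⬝ᵥ
            ((1 + (α : ℂ) • ((Matrix.of fun i (j : Fin m) => H i (k.succAbove j)) *
                (Matrix.of fun i (j : Fin m) => H i (k.succAbove j))ᴴ))⁻¹ *ᵥ
              fun i => H i k)) := by
  have hA := aux_posDef H α hα
  refine ⟨hA.isUnit, ?_⟩
  set G : Matrix (Fin N) (Fin m) ℂ := Matrix.of fun i (j : Fin m) => H i (k.succAbove j) with hG
  set h : Fin N → ℂ := fun i => H i k with hh
  have hB : (1 + (α : ℂ) • (G * Gᴴ)).PosDef := by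
    simpa using aux_posDef Gᴴ α hα
  have hsub : (1 + (α : ℂ) • (Hᴴ * H)).submatrix k.succAbove k.succAbove
      = 1 + (α : ℂ) • (Gᴴ * G) := by
    ext i j
    simp [Matrix.mul_apply, Matrix.one_apply, hG]
  have hHH : 1 + (α : ℂ) • (H * Hᴴ) = (1 + (α : ℂ) • (G * Gᴴ))
      + replicateCol Unit ((α : ℂ) • h) * replicateRow Unit (star h) := by
    ext i j
    simp [Matrix.mul_apply, hG, hh, Fin.sum_univ_succAbove _ k]
    ring
  have hdA : (1 + (α : ℂ) • (Hᴴ * H)).det = (1 + (α : ℂ) • (G * Gᴴ)).det *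
      (1 + (α : ℂ) * (star h ⬝ᵥ ((1 + (α : ℂ) • (G * Gᴴ))⁻¹ *ᵥ h))) := by
    rw [aux_comm, hHH, Matrix.det_add_replicateCol_mul_replicateRow hB.det_pos.ne'.isUnit]
    congr 1
    rw [Matrix.mul_assoc, ← Matrix.replicateCol_mulVec, Matrix.mulVec_smul]
    simp [Matrix.mul_apply, dotProduct, Finset.mul_sum, mul_left_comm]
  have hA0 := hA.det_pos.ne'
  have hB0 := hB.det_pos.ne'
  have hkk : ((1 + (α : ℂ) • (Hᴴ * H))⁻¹ : Matrix (Fin (m+1)) (Fin (m+1)) ℂ) k k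
      = (1 + (α : ℂ) • (G * Gᴴ)).det / (1 + (α : ℂ) • (Hᴴ * H)).det := by
    rw [Matrix.inv_def, Matrix.smul_apply, Matrix.adjugate_fin_succ_eq_det_submatrix, hsub,
      aux_comm G, ← two_mul, pow_mul]
    simp [div_eq_inv_mul]
  rw [hkk, one_div_div, hdA, mul_div_cancel_left₀ _ hB0]
  ring
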